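/- The predicate formula M: ∀x (P(x) ∨ ¬P(x)) & ¬¬∃x P(x) → ∃x P(x) (the Markov principle) is absolutely realizable. -/

import Mathlib

namespace Cpc

/-! ### Recursion-theoretic preliminaries -/

/-- Kleene application `{e}(a)`: the unary partial recursive function with Gödel number `e`,
applied to `a`. -/
def K (e a : ℕ) : Part ℕ := Nat.Partrec.Code.eval (Denumerable.ofNat Nat.Partrec.Code e) a

/-- `(e)ᵢ`: the exponent of the `i`-th prime in the prime factorization of `e`. -/
noncomputable def pexp (i e : ℕ) : ℕ := Nat.factorization e (Nat.nth Nat.Prime i)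

/-! ### The Cantor pairing function and the enumeration `g` of finitely supported functions -/

/-- The Cantor pairing `c(x,y) = (x+y)(x+y+1)/2 + x`. -/
def cpair (x y : ℕ) : ℕ := (x + y) * (x + y + 1) / 2 + x

/-- Simultaneous computation of the two inverse projections of the Cantor pairing. -/
def lrAux : ℕ → ℕ × ℕ
  | 0 => (0, 0)
  | n + 1 =>
    let p := lrAux n
    if p.2 = 0 then (0, p.1 + 1) else (p.1 + 1, p.2 - 1)

/-- The first projection `l` of the Cantor pairing. -/
def cl (n : ℕ) : ℕ := (lrAux n).1

/-- The second projection `r` of the Cantor pairing. -/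
def cr (n : ℕ) : ℕ := (lrAux n).2

/-- `l*(x,y)`: `l*(x,0) = x`, `l*(x,y+1) = l(l*(x,y))`. -/
def lstar (x : ℕ) : ℕ → ℕ
  | 0 => x
  | y + 1 => cl (lstar x y)

/-- `g(x,y) = r(l*(x,y))`: the enumeration of all finitely supported functions `ℕ → ℕ`. -/
def g (x y : ℕ) : ℕ := cr (lstar x y)

/-- `h(x,y,0) = c(l(x),y)`, `h(x,y,z+1) = c(h(l(x),y,z), r(x))`. -/
def h : ℕ → ℕ → ℕ → ℕ
  | x, y, 0 => cpair (cl x) y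
  | x, y, z + 1 => cpair (h (cl x) y z) (cr x)


/-! ### The predicate language `L*` -/

/-- Individual terms of the language `L*`: individual variables (named by natural numbers)
and individual constants for all natural numbers. -/
inductive PTerm : Type
  | var (v : ℕ)
  | const (c : ℕ)
  deriving DecidableEq

/-- Evaluation of a term under a valuation of the individual variables. -/
def PTerm.eval (ρ : ℕ → ℕ) : PTerm → ℕ
  | var v => ρ v
  | const c => c

/-- The (free) variables of a term. -/
def PTerm.fv : PTerm → Finset ℕ
  | var v => {v}
  | const _ => ∅

/-- Formulas of the predicate language `L*`: `⊥`, atomic formulas `Pⁿᵢ(t₁,…,tₙ)`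
(where the predicate variable `Pⁿᵢ` is recorded by its index `i`; its arity `n` is the
length of the argument list), and the connectives and quantifiers. -/
inductive PFml : Type
  | bot
  | atom (i : ℕ) (args : List PTerm)
  | and (φ ψ : PFml)
  | or (φ ψ : PFml)
  | imp (φ ψ : PFml)
  | all (x : ℕ) (φ : PFml)
  | ex (x : ℕ) (φ : PFml)

/-- `¬Φ` abbreviates `Φ → ⊥`. -/
def PFml.not (φ : PFml) : PFml := φ.imp .bot

/-- `Φ ↔ Ψ` abbreviates `(Φ → Ψ) & (Ψ → Φ)`. -/
def PFml.iff (φ ψ : PFml) : PFml := (φ.imp ψ).and (ψ.imp φ)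

/-- Conjunction of a list of formulas. -/
def bigAnd (l : List PFml) : PFml := l.foldr PFml.and (PFml.bot.imp PFml.bot)

/-- The free variables of a formula. -/
def PFml.fv : PFml → Finset ℕ
  | bot => ∅
  | atom _ args => args.foldr (fun t s => t.fv ∪ s) ∅
  | and φ ψ => φ.fv ∪ ψ.fv
  | or φ ψ => φ.fv ∪ ψ.fv
  | imp φ ψ => φ.fv ∪ ψ.fv
  | all x φ => φ.fv.erase x
  | ex x φ => φ.fv.erase x

/-- The bound variables of a formula. -/
def PFml.bv : PFml → Finset ℕ
  | bot => ∅
  | atom _ _ => ∅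
  | and φ ψ => φ.bv ∪ ψ.bv
  | or φ ψ => φ.bv ∪ ψ.bv
  | imp φ ψ => φ.bv ∪ ψ.bv
  | all x φ => insert x φ.bv
  | ex x φ => insert x φ.bv

/-- A formula is closed if it has no free variables. -/
def PFml.Closed (φ : PFml) : Prop := φ.fv = ∅

/-- Simultaneous substitution of terms for variables in a term. -/
def PTerm.msub (s : ℕ → PTerm) : PTerm → PTerm
  | var v => s v
  | const c => const c

/-- Simultaneous (naive, i.e. non-capture-avoiding) substitution of terms for the free
occurrences of variables in a formula. -/
def PFml.msub (s : ℕ → PTerm) : PFml → PFml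
  | bot => bot
  | atom i args => atom i (args.map (PTerm.msub s))
  | and φ ψ => (φ.msub s).and (ψ.msub s)
  | or φ ψ => (φ.msub s).or (ψ.msub s)
  | imp φ ψ => (φ.msub s).imp (ψ.msub s)
  | all x φ => all x (φ.msub fun v => if v = x then .var x else s v)
  | ex x φ => ex x (φ.msub fun v => if v = x then .var x else s v)

/-- The substitution replacing the single variable `x` by the term `t`. -/
def sub1 (x : ℕ) (t : PTerm) : ℕ → PTerm := fun v => if v = x then t else .var v

/-- The simultaneous substitution `s` is free for (admissible in) the formula, i.e. no
variable of a substituted term gets captured by a quantifier. -/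
def PFml.FreeForM (s : ℕ → PTerm) : PFml → Prop
  | bot => True
  | atom _ _ => True
  | and φ ψ => φ.FreeForM s ∧ ψ.FreeForM s
  | or φ ψ => φ.FreeForM s ∧ ψ.FreeForM s
  | imp φ ψ => φ.FreeForM s ∧ ψ.FreeForM s
  | all x φ => (∀ v ∈ φ.fv, v ≠ x → x ∉ (s v).fv) ∧
      φ.FreeForM (fun v => if v = x then .var x else s v)
  | ex x φ => (∀ v ∈ φ.fv, v ≠ x → x ∉ (s v).fv) ∧
      φ.FreeForM (fun v => if v = x then .var x else s v)

/-! ### Interpretations and realizability -/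

/-- An `n`-ary generalized predicate. -/
def GenPred (n : ℕ) : Type := (Fin n → ℕ) → Set ℕ

/-- An interpretation assigns to each predicate variable `Pⁿᵢ` an `n`-ary generalized
predicate. -/
def Interp : Type := (n : ℕ) → ℕ → GenPred n

/-- The realizability relation `e rᶠ Φ` (relative to a valuation `ρ` of the individual
variables). -/
def Realizes (f : Interp) : (ℕ → ℕ) → ℕ → PFml → Prop
  | _, _, .bot => False
  | ρ, e, .atom i args => e ∈ f args.length i (fun j => (args.get j).eval ρ)
  | ρ, e, .and φ ψ => Realizes f ρ (pexp 0 e) φ ∧ Realizes f ρ (pexp 1 e) ψ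
  | ρ, e, .or φ ψ => (pexp 0 e = 0 ∧ Realizes f ρ (pexp 1 e) φ) ∨
      (pexp 0 e = 1 ∧ Realizes f ρ (pexp 1 e) ψ)
  | ρ, e, .imp φ ψ => ∀ a, Realizes f ρ a φ → ∃ b ∈ K e a, Realizes f ρ b ψ
  | ρ, e, .all x φ => ∀ a, ∃ b ∈ K e a, Realizes f (Function.update ρ x a) b φ
  | ρ, e, .ex x φ => Realizes f (Function.update ρ x (pexp 0 e)) (pexp 1 e) φ

/-- The zero valuation, used for closed formulas. -/
def rho0 : ℕ → ℕ := fun _ => 0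

/-- The closed formula `Φ` is realizable in the interpretation `f`. -/
def FRealizable (f : Interp) (φ : PFml) : Prop := ∃ e, Realizes f rho0 e φ

/-- The closed predicate formula `Φ` is (uniformly) absolutely realizable. -/
def AbsRealizable (φ : PFml) : Prop := ∃ e, ∀ f : Interp, Realizes f rho0 e φ


/-! ### The arithmetical fragment: `Z,E,S,A,M` are the predicate variables
`P¹₀, P²₀, P²₁, P³₀, P³₁`. -/

/-- `Z(t)`, i.e. the atomic formula `P¹₀(t)`. -/
def vZ (t : PTerm) : PFml := .atom 0 [t]
/-- `E(t,u)`, i.e. `P²₀(t,u)`. -/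
def vE (t u : PTerm) : PFml := .atom 0 [t, u]
/-- `S(t,u)`, i.e. `P²₁(t,u)`. -/
def vS (t u : PTerm) : PFml := .atom 1 [t, u]
/-- `A(t,u,w)`, i.e. `P³₀(t,u,w)`. -/
def vA (t u w : PTerm) : PFml := .atom 0 [t, u, w]
/-- `M(t,u,w)`, i.e. `P³₁(t,u,w)`. -/
def vM (t u w : PTerm) : PFml := .atom 1 [t, u, w]

/-- The standard reading of the arithmetical predicate symbols. -/
def arithStd : (n : ℕ) → ℕ → (Fin n → ℕ) → Prop
  | 1, 0, v => v 0 = 0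
  | 2, 0, v => v 0 = v 1
  | 2, 1, v => v 0 + 1 = v 1
  | 3, 0, v => v 0 + v 1 = v 2
  | 3, 1, v => v 0 * v 1 = v 2
  | _, _, _ => False

/-- The standard interpretation: an atomic arithmetical statement is realized by `e`
iff `e = 0` and the statement is true. -/
def stdInterp : Interp := fun n i v => {e | e = 0 ∧ arithStd n i v}

/-- Classical truth of an arithmetical formula in the standard model (atoms of
non-arithmetical predicate variables are read as false). -/
def TrueStd : (ℕ → ℕ) → PFml → Prop
  | _, .bot => False
  | ρ, .atom i args => arithStd args.length i (fun j => (args.get j).eval ρ)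
  | ρ, .and φ ψ => TrueStd ρ φ ∧ TrueStd ρ ψ
  | ρ, .or φ ψ => TrueStd ρ φ ∨ TrueStd ρ ψ
  | ρ, .imp φ ψ => TrueStd ρ φ → TrueStd ρ ψ
  | ρ, .all x φ => ∀ a, TrueStd (Function.update ρ x a) φ
  | ρ, .ex x φ => ∃ a, TrueStd (Function.update ρ x a) φ

/-- The pairs (arity, index) naming the arithmetical predicate symbols `Z,E,S,A,M`. -/
def arithSlot (n i : ℕ) : Prop := (n = 1 ∧ i = 0) ∨ (n = 2 ∧ i ≤ 1) ∨ (n = 3 ∧ i ≤ 1)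

/-- The `Ar`-formula `x ≤ t`, i.e. `∃z A(z,x,t)`. -/
def leF (z x : ℕ) (t : PTerm) : PFml := .ex z (vA (.var z) (.var x) t)

/-- `Δ₀`-formulas of the language `Ar`. -/
inductive IsDelta0 : PFml → Prop
  | bot : IsDelta0 .bot
  | atom {i : ℕ} {args : List PTerm} : arithSlot args.length i → IsDelta0 (.atom i args)
  | and {φ ψ} : IsDelta0 φ → IsDelta0 ψ → IsDelta0 (φ.and ψ)
  | or {φ ψ} : IsDelta0 φ → IsDelta0 ψ → IsDelta0 (φ.or ψ)
  | imp {φ ψ} : IsDelta0 φ → IsDelta0 ψ → IsDelta0 (φ.imp ψ)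
  | ball {x z : ℕ} {t : PTerm} {φ} : x ∉ t.fv → z ∉ t.fv → z ≠ x → IsDelta0 φ →
      IsDelta0 (.all x ((leF z x t).imp φ))
  | bex {x z : ℕ} {t : PTerm} {φ} : x ∉ t.fv → z ∉ t.fv → z ≠ x → IsDelta0 φ →
      IsDelta0 (.ex x ((leF z x t).and φ))

/-- `Σ`-formulas of the language `Ar`. -/
inductive IsSigma : PFml → Prop
  | delta0 {φ} : IsDelta0 φ → IsSigma φ
  | and {φ ψ} : IsSigma φ → IsSigma ψ → IsSigma (φ.and ψ)
  | or {φ ψ} : IsSigma φ → IsSigma ψ → IsSigma (φ.or ψ)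
  | ball {x z : ℕ} {t : PTerm} {φ} : x ∉ t.fv → z ∉ t.fv → z ≠ x → IsSigma φ →
      IsSigma (.all x ((leF z x t).imp φ))
  | bex {x z : ℕ} {t : PTerm} {φ} : x ∉ t.fv → z ∉ t.fv → z ≠ x → IsSigma φ →
      IsSigma (.ex x ((leF z x t).and φ))
  | ex {x : ℕ} {φ} : IsSigma φ → IsSigma (.ex x φ)




/-- Iterated universal quantification. -/
def alls (xs : List ℕ) (φ : PFml) : PFml := xs.foldr PFml.all φ

open PTerm (var const) in
/-- The axioms `A₁ – A₂₅` of the predicate version `IRA*` of intuitionistic Robinson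
arithmetic. -/
def IRAstarAxioms : List PFml := [
  alls [0,1,2] (((vS (var 0) (var 2)).and (vS (var 1) (var 2))).imp (vE (var 0) (var 1))),
  alls [0,1] ((vS (var 0) (var 1)).imp (vZ (var 1)).not),
  alls [0,1,2] (((vE (var 0) (var 1)).and (vE (var 0) (var 2))).imp (vE (var 1) (var 2))),
  alls [0,1,2] (((vE (var 0) (var 1)).and (vS (var 0) (var 2))).imp (vS (var 1) (var 2))),
  alls [0,1] ((vZ (var 1)).imp (vA (var 0) (var 1) (var 0))),
  alls [0,1,2,3,4] ((((vS (var 1) (var 2)).and (vA (var 0) (var 1) (var 3))).and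
      (vS (var 3) (var 4))).imp (vA (var 0) (var 2) (var 4))),
  alls [0,1] ((vZ (var 1)).imp (vM (var 0) (var 1) (var 1))),
  alls [0,1,2,3,4] ((((vS (var 1) (var 2)).and (vM (var 0) (var 1) (var 3))).and
      (vA (var 3) (var 0) (var 4))).imp (vM (var 0) (var 2) (var 4))),
  alls [0,1,2,3] (((vE (var 0) (var 1)).and (vA (var 0) (var 2) (var 3))).imp
      (vA (var 1) (var 2) (var 3))),
  alls [0,1,2,3] (((vE (var 1) (var 2)).and (vA (var 0) (var 1) (var 3))).imp
      (vA (var 0) (var 2) (var 3))),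
  alls [0,1,2,3] (((vE (var 0) (var 1)).and (vM (var 0) (var 2) (var 3))).imp
      (vM (var 1) (var 2) (var 3))),
  alls [0,1,2,3] (((vE (var 1) (var 2)).and (vM (var 0) (var 1) (var 3))).imp
      (vM (var 0) (var 2) (var 3))),
  PFml.all 0 ((vZ (var 0)).or (.ex 1 (vS (var 1) (var 0)))),
  PFml.ex 0 (vZ (var 0)),
  alls [0,1] (((vZ (var 0)).and (vZ (var 1))).imp (vE (var 0) (var 1))),
  alls [0,1] (((vE (var 0) (var 1)).and (vZ (var 0))).imp (vZ (var 1))),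
  PFml.all 0 (.ex 1 (vS (var 0) (var 1))),
  alls [0,1,2] (((vS (var 0) (var 1)).and (vS (var 0) (var 2))).imp (vE (var 1) (var 2))),
  alls [0,1,2] (((vS (var 0) (var 1)).and (vE (var 1) (var 2))).imp (vS (var 0) (var 2))),
  alls [0,1] (.ex 2 (vA (var 0) (var 1) (var 2))),
  alls [0,1,2,3] (((vA (var 0) (var 1) (var 2)).and (vA (var 0) (var 1) (var 3))).imp
      (vE (var 2) (var 3))),
  alls [0,1,2,3] (((vA (var 0) (var 1) (var 2)).and (vE (var 2) (var 3))).imp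
      (vA (var 0) (var 1) (var 3))),
  alls [0,1] (.ex 2 (vM (var 0) (var 1) (var 2))),
  alls [0,1,2,3] (((vM (var 0) (var 1) (var 2)).and (vM (var 0) (var 1) (var 3))).imp
      (vE (var 2) (var 3))),
  alls [0,1,2,3] (((vM (var 0) (var 1) (var 2)).and (vE (var 2) (var 3))).imp
      (vM (var 0) (var 1) (var 3)))]

/-- `A₂₆`: functionality of the formula `G`:
`∀x,y,z₁,z₂ (G(x,y,z₁) & G(x,y,z₂) → E(z₁,z₂))`. Here `G = G(x,y,z)` has distinguished
free variables `0,1,2` playing the role of `x,y,z`. -/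
def A26 (G : PFml) : PFml :=
  alls [0,1,2,3] ((G.and (G.msub (sub1 2 (.var 3)))).imp (vE (.var 2) (.var 3)))

/-- `H(y,x)`, i.e. `∃w(Z(w) & G(y,x,w))`, expressing `{y}(x) = 0`; here `y,x` are the
variables `1,0` and `w` is the fresh variable `5`. -/
def Hfml (G : PFml) : PFml :=
  .ex 5 ((vZ (.var 5)).and (G.msub fun v =>
    if v = 0 then .var 1 else if v = 1 then .var 0 else if v = 2 then .var 5 else .var v))

/-- `B(v,x)` with `v,x` the variables `4,0`; here `B = B(v,x)` has distinguished free
variables `0,1` playing the role of `v,x`. -/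
def B40 (B : PFml) : PFml :=
  B.msub fun v => if v = 0 then .var 4 else if v = 1 then .var 0 else .var v

/-- `A₂₇`: `∀y,z ¬¬∃v ∀x (x ≤ z → (B(v,x) ↔ H(y,x)))`. -/
def A27 (G B : PFml) : PFml :=
  alls [1,2] (PFml.not (PFml.not (.ex 4 (.all 0
    ((leF 6 0 (.var 2)).imp ((B40 B).iff (Hfml G)))))))

/-- `A₂₈`: `∀x,y (B(x,y) ∨ ¬B(x,y))`. -/
def A28 (B : PFml) : PFml := alls [0,1] (B.or B.not)

/-- `Q`: the conjunction of the formulas `A₁ – A₂₈`. -/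
def Qfml (G B : PFml) : PFml := bigAnd (IRAstarAxioms ++ [A26 G, A27 G B, A28 B])

/-- The formula `[n](t)`: `[0](t) = Z(t)`, `[n+1](t) = ∃xₙ([n](xₙ) & S(xₙ,t))`. -/
def numFt : ℕ → PTerm → PFml
  | 0, t => vZ t
  | n + 1, t => .ex n ((numFt n (.var n)).and (vS (.var n) t))



/-- The axiom of equality for the predicate variable `Pⁿᵢ`:
`∀x⃗ ∀y⃗ (E(x₁,y₁) & … & E(xₙ,yₙ) → (P(x⃗) → P(y⃗)))`. -/
def eqAx (n i : ℕ) : PFml :=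
  alls ((List.range n) ++ (List.range n).map (· + n))
    ((bigAnd ((List.range n).map fun j => vE (.var j) (.var (n + j)))).imp
      ((PFml.atom i ((List.range n).map PTerm.var)).imp
        (PFml.atom i ((List.range n).map fun j => PTerm.var (n + j)))))




/-- Schemes over the arithmetical language: formulas of the language `LS*`, whose
atoms are either arithmetical atoms built from the predicate symbols `Z,E,S,A,M` of
`Ar`, or atoms built from the predicate variables `Pⁿᵢ`. -/
inductive Scheme : Type
  | bot
  | sZ (t : PTerm)
  | sE (t u : PTerm)
  | sS (t u : PTerm)
  | sA (t u w : PTerm)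
  | sM (t u w : PTerm)
  | patom (i : ℕ) (args : List PTerm)
  | and (φ ψ : Scheme)
  | or (φ ψ : Scheme)
  | imp (φ ψ : Scheme)
  | all (x : ℕ) (φ : Scheme)
  | ex (x : ℕ) (φ : Scheme)

def Scheme.not (φ : Scheme) : Scheme := φ.imp .bot
def Scheme.iff (φ ψ : Scheme) : Scheme := (φ.imp ψ).and (ψ.imp φ)

def Scheme.fv : Scheme → Finset ℕ
  | bot => ∅
  | sZ t => t.fv
  | sE t u => t.fv ∪ u.fv
  | sS t u => t.fv ∪ u.fv
  | sA t u w => t.fv ∪ u.fv ∪ w.fv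
  | sM t u w => t.fv ∪ u.fv ∪ w.fv
  | patom _ args => args.foldr (fun t s => t.fv ∪ s) ∅
  | and φ ψ => φ.fv ∪ ψ.fv
  | or φ ψ => φ.fv ∪ ψ.fv
  | imp φ ψ => φ.fv ∪ ψ.fv
  | all x φ => φ.fv.erase x
  | ex x φ => φ.fv.erase x

/-- All individual variables occurring in a scheme (free or bound). -/
def Scheme.vars : Scheme → Finset ℕ
  | bot => ∅
  | sZ t => t.fv
  | sE t u => t.fv ∪ u.fv
  | sS t u => t.fv ∪ u.fv
  | sA t u w => t.fv ∪ u.fv ∪ w.fv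
  | sM t u w => t.fv ∪ u.fv ∪ w.fv
  | patom _ args => args.foldr (fun t s => t.fv ∪ s) ∅
  | and φ ψ => φ.vars ∪ ψ.vars
  | or φ ψ => φ.vars ∪ ψ.vars
  | imp φ ψ => φ.vars ∪ ψ.vars
  | all x φ => insert x φ.vars
  | ex x φ => insert x φ.vars

def Scheme.bv : Scheme → Finset ℕ
  | and φ ψ => φ.bv ∪ ψ.bv
  | or φ ψ => φ.bv ∪ ψ.bv
  | imp φ ψ => φ.bv ∪ ψ.bv
  | all x φ => insert x φ.bv
  | ex x φ => insert x φ.bv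
  | _ => ∅

def Scheme.Closed (φ : Scheme) : Prop := φ.fv = ∅

/-- The predicate variables (arity, index) occurring in a scheme. -/
def Scheme.pvars : Scheme → Finset (ℕ × ℕ)
  | patom i args => {(args.length, i)}
  | and φ ψ => φ.pvars ∪ ψ.pvars
  | or φ ψ => φ.pvars ∪ ψ.pvars
  | imp φ ψ => φ.pvars ∪ ψ.pvars
  | all _ φ => φ.pvars
  | ex _ φ => φ.pvars
  | _ => ∅

def Scheme.msub (s : ℕ → PTerm) : Scheme → Scheme
  | bot => bot
  | sZ t => sZ (t.msub s)
  | sE t u => sE (t.msub s) (u.msub s)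
  | sS t u => sS (t.msub s) (u.msub s)
  | sA t u w => sA (t.msub s) (u.msub s) (w.msub s)
  | sM t u w => sM (t.msub s) (u.msub s) (w.msub s)
  | patom i args => patom i (args.map (PTerm.msub s))
  | and φ ψ => (φ.msub s).and (ψ.msub s)
  | or φ ψ => (φ.msub s).or (ψ.msub s)
  | imp φ ψ => (φ.msub s).imp (ψ.msub s)
  | all x φ => all x (φ.msub fun v => if v = x then .var x else s v)
  | ex x φ => ex x (φ.msub fun v => if v = x then .var x else s v)

def Scheme.FreeForM (s : ℕ → PTerm) : Scheme → Prop
  | and φ ψ => φ.FreeForM s ∧ ψ.FreeForM s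
  | or φ ψ => φ.FreeForM s ∧ ψ.FreeForM s
  | imp φ ψ => φ.FreeForM s ∧ ψ.FreeForM s
  | all x φ => (∀ v ∈ φ.fv, v ≠ x → x ∉ (s v).fv) ∧
      φ.FreeForM (fun v => if v = x then .var x else s v)
  | ex x φ => (∀ v ∈ φ.fv, v ≠ x → x ∉ (s v).fv) ∧
      φ.FreeForM (fun v => if v = x then .var x else s v)
  | _ => True

/-- Realizability of schemes: arithmetical atoms are realized by `e` iff `e = 0` and the
atom is true in the standard model; atoms of predicate variables are interpreted by `f`. -/
def SReal (f : Interp) : (ℕ → ℕ) → ℕ → Scheme → Prop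
  | _, _, .bot => False
  | ρ, e, .sZ t => e = 0 ∧ t.eval ρ = 0
  | ρ, e, .sE t u => e = 0 ∧ t.eval ρ = u.eval ρ
  | ρ, e, .sS t u => e = 0 ∧ t.eval ρ + 1 = u.eval ρ
  | ρ, e, .sA t u w => e = 0 ∧ t.eval ρ + u.eval ρ = w.eval ρ
  | ρ, e, .sM t u w => e = 0 ∧ t.eval ρ * u.eval ρ = w.eval ρ
  | ρ, e, .patom i args => e ∈ f args.length i (fun j => (args.get j).eval ρ)
  | ρ, e, .and φ ψ => SReal f ρ (pexp 0 e) φ ∧ SReal f ρ (pexp 1 e) ψ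
  | ρ, e, .or φ ψ => (pexp 0 e = 0 ∧ SReal f ρ (pexp 1 e) φ) ∨
      (pexp 0 e = 1 ∧ SReal f ρ (pexp 1 e) ψ)
  | ρ, e, .imp φ ψ => ∀ a, SReal f ρ a φ → ∃ b ∈ K e a, SReal f ρ b ψ
  | ρ, e, .all x φ => ∀ a, ∃ b ∈ K e a, SReal f (Function.update ρ x a) b φ
  | ρ, e, .ex x φ => SReal f (Function.update ρ x (pexp 0 e)) (pexp 1 e) φ

/-- A closed scheme is uniformly absolutely realizable if a single `e` realizes it in
every interpretation. -/
def AbsRealizableS (φ : Scheme) : Prop := ∃ e, ∀ f : Interp, SReal f rho0 e φ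

/-- Classical truth of a scheme with no predicate variables (arithmetical formula)
in the standard model. -/
def STrue : (ℕ → ℕ) → Scheme → Prop
  | _, .bot => False
  | ρ, .sZ t => t.eval ρ = 0
  | ρ, .sE t u => t.eval ρ = u.eval ρ
  | ρ, .sS t u => t.eval ρ + 1 = u.eval ρ
  | ρ, .sA t u w => t.eval ρ + u.eval ρ = w.eval ρ
  | ρ, .sM t u w => t.eval ρ * u.eval ρ = w.eval ρ
  | _, .patom _ _ => False
  | ρ, .and φ ψ => STrue ρ φ ∧ STrue ρ ψ
  | ρ, .or φ ψ => STrue ρ φ ∨ STrue ρ ψ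
  | ρ, .imp φ ψ => STrue ρ φ → STrue ρ ψ
  | ρ, .all x φ => ∀ a, STrue (Function.update ρ x a) φ
  | ρ, .ex x φ => ∃ a, STrue (Function.update ρ x a) φ

/-- `x ≤ t` in the scheme language: `∃z A(z,x,t)`. -/
def leS (z x : ℕ) (t : PTerm) : Scheme := .ex z (.sA (.var z) (.var x) t)

/-- `Δ₀`-formulas of `Ar` (as schemes). -/
inductive IsDelta0S : Scheme → Prop
  | bot : IsDelta0S .bot
  | sZ (t) : IsDelta0S (.sZ t)
  | sE (t u) : IsDelta0S (.sE t u)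
  | sS (t u) : IsDelta0S (.sS t u)
  | sA (t u w) : IsDelta0S (.sA t u w)
  | sM (t u w) : IsDelta0S (.sM t u w)
  | and {φ ψ} : IsDelta0S φ → IsDelta0S ψ → IsDelta0S (φ.and ψ)
  | or {φ ψ} : IsDelta0S φ → IsDelta0S ψ → IsDelta0S (φ.or ψ)
  | imp {φ ψ} : IsDelta0S φ → IsDelta0S ψ → IsDelta0S (φ.imp ψ)
  | ball {x z : ℕ} {t : PTerm} {φ} : x ∉ t.fv → z ∉ t.fv → z ≠ x → IsDelta0S φ →
      IsDelta0S (.all x ((leS z x t).imp φ))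
  | bex {x z : ℕ} {t : PTerm} {φ} : x ∉ t.fv → z ∉ t.fv → z ≠ x → IsDelta0S φ →
      IsDelta0S (.ex x ((leS z x t).and φ))

/-- `Σ`-formulas of `Ar` (as schemes). -/
inductive IsSigmaS : Scheme → Prop
  | delta0 {φ} : IsDelta0S φ → IsSigmaS φ
  | and {φ ψ} : IsSigmaS φ → IsSigmaS ψ → IsSigmaS (φ.and ψ)
  | or {φ ψ} : IsSigmaS φ → IsSigmaS ψ → IsSigmaS (φ.or ψ)
  | ball {x z : ℕ} {t : PTerm} {φ} : x ∉ t.fv → z ∉ t.fv → z ≠ x → IsSigmaS φ →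
      IsSigmaS (.all x ((leS z x t).imp φ))
  | bex {x z : ℕ} {t : PTerm} {φ} : x ∉ t.fv → z ∉ t.fv → z ≠ x → IsSigmaS φ →
      IsSigmaS (.ex x ((leS z x t).and φ))
  | ex {x : ℕ} {φ} : IsSigmaS φ → IsSigmaS (.ex x φ)

/-- `Φ[c]`: replace each atom `Pⁿᵢ(t₁,…,tₙ)` of a predicate variable by
`Pⁿ⁺¹ᵢ(c,t₁,…,tₙ)` (arithmetical atoms are unchanged). -/
def Scheme.bracketC (c : ℕ) : Scheme → Scheme
  | patom i args => patom i (.const c :: args)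
  | and φ ψ => (φ.bracketC c).and (ψ.bracketC c)
  | or φ ψ => (φ.bracketC c).or (ψ.bracketC c)
  | imp φ ψ => (φ.bracketC c).imp (ψ.bracketC c)
  | all x φ => all x (φ.bracketC c)
  | ex x φ => ex x (φ.bracketC c)
  | φ => φ

/-- `Φ[z]` for a variable `z`: replace each atom `Pⁿᵢ(t₁,…,tₙ)` of a predicate variable
by `Pⁿ⁺¹ᵢ(z,t₁,…,tₙ)`. -/
def Scheme.bracketV (z : ℕ) : Scheme → Scheme
  | patom i args => patom i (.var z :: args)
  | and φ ψ => (φ.bracketV z).and (ψ.bracketV z)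
  | or φ ψ => (φ.bracketV z).or (ψ.bracketV z)
  | imp φ ψ => (φ.bracketV z).imp (ψ.bracketV z)
  | all x φ => all x (φ.bracketV z)
  | ex x φ => ex x (φ.bracketV z)
  | φ => φ

/-- The interpretation `f_c`: `f_c(Pⁿᵢ)(k₁,…,kₙ) = f(Pⁿ⁺¹ᵢ)(c,k₁,…,kₙ)`. -/
def interpCons (c : ℕ) (f : Interp) : Interp := fun n i v => f (n + 1) i (Fin.cons c v)

/-- Does the predicate variable `Pⁿᵢ` occur in the scheme? -/
def Scheme.occursP (n i : ℕ) : Scheme → Prop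
  | patom j args => j = i ∧ args.length = n
  | and φ ψ => φ.occursP n i ∨ ψ.occursP n i
  | or φ ψ => φ.occursP n i ∨ ψ.occursP n i
  | imp φ ψ => φ.occursP n i ∨ ψ.occursP n i
  | all _ φ => φ.occursP n i
  | ex _ φ => φ.occursP n i
  | _ => False

/-- The substitution of the terms `args` for the distinguished variables `x₁,…,xₙ`
(named `0,…,n-1`). -/
def argSub (args : List PTerm) : ℕ → PTerm :=
  fun v => if h : v < args.length then args.get ⟨v, h⟩ else .var v

/-- Substitution of schemes for predicate variables: each atom `Pⁿᵢ(t₁,…,tₙ)` is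
replaced by the result of simultaneously substituting `t₁,…,tₙ` for the distinguished
variables `0,…,n-1` of the scheme `σ n i`. -/
def Scheme.substP (σ : ℕ → ℕ → Scheme) : Scheme → Scheme
  | patom i args => (σ args.length i).msub (argSub args)
  | and φ ψ => (φ.substP σ).and (ψ.substP σ)
  | or φ ψ => (φ.substP σ).or (ψ.substP σ)
  | imp φ ψ => (φ.substP σ).imp (ψ.substP σ)
  | all x φ => all x (φ.substP σ)
  | ex x φ => ex x (φ.substP σ)
  | φ => φ

/-- The list of schemes `σ` is acceptable for substitution in the given scheme:
(1) at every atom of a predicate variable the substitution of the argument terms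
for the distinguished variables is capture-free, and (2) no atom of a predicate
variable lies in the scope of a quantifier binding a "superfluous" parameter of the
scheme substituted for that variable. -/
def Scheme.Acceptable (σ : ℕ → ℕ → Scheme) : Scheme → Prop
  | patom i args => (σ args.length i).FreeForM (argSub args)
  | and φ ψ => φ.Acceptable σ ∧ ψ.Acceptable σ
  | or φ ψ => φ.Acceptable σ ∧ ψ.Acceptable σ
  | imp φ ψ => φ.Acceptable σ ∧ ψ.Acceptable σ
  | all x φ => (∀ n i, φ.occursP n i → x ∉ (σ n i).fv \ Finset.range n) ∧ φ.Acceptable σ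
  | ex x φ => (∀ n i, φ.occursP n i → x ∉ (σ n i).fv \ Finset.range n) ∧ φ.Acceptable σ
  | _ => True

/-- The universal closure of a scheme. -/
def Scheme.univClosure (φ : Scheme) : Scheme :=
  (φ.fv.sort (· ≤ ·)).foldr Scheme.all φ




/-- Natural deduction for the intuitionistic predicate calculus `IQC` in the
language `L*`. -/
inductive IQC : List PFml → PFml → Prop
  | hyp {Γ : List PFml} {φ : PFml} : φ ∈ Γ → IQC Γ φ
  | botE {Γ φ} : IQC Γ .bot → IQC Γ φ
  | andI {Γ : List PFml} {φ ψ : PFml} : IQC Γ φ → IQC Γ ψ → IQC Γ (φ.and ψ)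
  | andE1 {Γ : List PFml} {φ ψ : PFml} : IQC Γ (φ.and ψ) → IQC Γ φ
  | andE2 {Γ : List PFml} {φ ψ : PFml} : IQC Γ (φ.and ψ) → IQC Γ ψ
  | orI1 {Γ : List PFml} {φ ψ : PFml} : IQC Γ φ → IQC Γ (φ.or ψ)
  | orI2 {Γ : List PFml} {φ ψ : PFml} : IQC Γ ψ → IQC Γ (φ.or ψ)
  | orE {Γ φ ψ χ} : IQC Γ (φ.or ψ) → IQC (φ :: Γ) χ → IQC (ψ :: Γ) χ → IQC Γ χ
  | impI {Γ : List PFml} {φ ψ : PFml} : IQC (φ :: Γ) ψ → IQC Γ (φ.imp ψ)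
  | impE {Γ : List PFml} {φ ψ : PFml} : IQC Γ (φ.imp ψ) → IQC Γ φ → IQC Γ ψ
  | allI {Γ x φ} : IQC Γ φ → (∀ ψ ∈ Γ, x ∉ ψ.fv) → IQC Γ (.all x φ)
  | allE {Γ x φ} (t : PTerm) : IQC Γ (.all x φ) → φ.FreeForM (sub1 x t) →
      IQC Γ (φ.msub (sub1 x t))
  | exI {Γ x φ} (t : PTerm) : IQC Γ (φ.msub (sub1 x t)) → φ.FreeForM (sub1 x t) →
      IQC Γ (.ex x φ)
  | exE {Γ x φ χ} : IQC Γ (.ex x φ) → IQC (φ :: Γ) χ → x ∉ χ.fv →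
      (∀ ψ ∈ Γ, x ∉ ψ.fv) → IQC Γ χ

/-- `Pⁿᵢ` occurs in the formula. -/
def PFml.occursP (n i : ℕ) : PFml → Prop
  | .atom j args => j = i ∧ args.length = n
  | .and φ ψ => φ.occursP n i ∨ ψ.occursP n i
  | .or φ ψ => φ.occursP n i ∨ ψ.occursP n i
  | .imp φ ψ => φ.occursP n i ∨ ψ.occursP n i
  | .all _ φ => φ.occursP n i
  | .ex _ φ => φ.occursP n i
  | _ => False



/-- Substitution of formulas for predicate variables. -/
def PFml.substP (σ : ℕ → ℕ → PFml) : PFml → PFml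
  | .atom i args => (σ args.length i).msub (argSub args)
  | .and φ ψ => (φ.substP σ).and (ψ.substP σ)
  | .or φ ψ => (φ.substP σ).or (ψ.substP σ)
  | .imp φ ψ => (φ.substP σ).imp (ψ.substP σ)
  | .all x φ => .all x (φ.substP σ)
  | .ex x φ => .ex x (φ.substP σ)
  | .bot => .bot

def PFml.AcceptableP (σ : ℕ → ℕ → PFml) : PFml → Prop
  | .atom i args => (σ args.length i).FreeForM (argSub args)
  | .and φ ψ => φ.AcceptableP σ ∧ ψ.AcceptableP σ
  | .or φ ψ => φ.AcceptableP σ ∧ ψ.AcceptableP σ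
  | .imp φ ψ => φ.AcceptableP σ ∧ ψ.AcceptableP σ
  | .all x φ => (∀ n i, φ.occursP n i → x ∉ (σ n i).fv \ Finset.range n) ∧ φ.AcceptableP σ
  | .ex x φ => (∀ n i, φ.occursP n i → x ∉ (σ n i).fv \ Finset.range n) ∧ φ.AcceptableP σ
  | .bot => True

/-- `φ` is a substitutional instance of the predicate formula `base`. -/
def IsInstance (base φ : PFml) : Prop :=
  ∃ σ : ℕ → ℕ → PFml, base.AcceptableP σ ∧ φ = base.substP σ



inductive LATerm : Type
  | var (v : ℕ)
  | zero
  | succ (t : LATerm)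
  | add (t u : LATerm)
  | mul (t u : LATerm)

def LATerm.eval (ρ : ℕ → ℕ) : LATerm → ℕ
  | var v => ρ v
  | zero => 0
  | succ t => t.eval ρ + 1
  | add t u => t.eval ρ + u.eval ρ
  | mul t u => t.eval ρ * u.eval ρ

def LATerm.fv : LATerm → Finset ℕ
  | var v => {v}
  | zero => ∅
  | succ t => t.fv
  | add t u => t.fv ∪ u.fv
  | mul t u => t.fv ∪ u.fv

def LATerm.msub (s : ℕ → LATerm) : LATerm → LATerm
  | var v => s v
  | zero => zero
  | succ t => succ (t.msub s)
  | add t u => add (t.msub s) (u.msub s)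
  | mul t u => mul (t.msub s) (u.msub s)

/-- The numeral for `n`. -/
def numeral : ℕ → LATerm
  | 0 => .zero
  | n + 1 => .succ (numeral n)

inductive LAFml : Type
  | eq (t u : LATerm)
  | and (φ ψ : LAFml)
  | or (φ ψ : LAFml)
  | imp (φ ψ : LAFml)
  | not (φ : LAFml)
  | all (x : ℕ) (φ : LAFml)
  | ex (x : ℕ) (φ : LAFml)

def LAFml.fv : LAFml → Finset ℕ
  | eq t u => t.fv ∪ u.fv
  | and φ ψ => φ.fv ∪ ψ.fv
  | or φ ψ => φ.fv ∪ ψ.fv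
  | imp φ ψ => φ.fv ∪ ψ.fv
  | not φ => φ.fv
  | all x φ => φ.fv.erase x
  | ex x φ => φ.fv.erase x

def LAFml.msub (s : ℕ → LATerm) : LAFml → LAFml
  | eq t u => eq (t.msub s) (u.msub s)
  | and φ ψ => (φ.msub s).and (ψ.msub s)
  | or φ ψ => (φ.msub s).or (ψ.msub s)
  | imp φ ψ => (φ.msub s).imp (ψ.msub s)
  | not φ => (φ.msub s).not
  | all x φ => all x (φ.msub fun v => if v = x then .var x else s v)
  | ex x φ => ex x (φ.msub fun v => if v = x then .var x else s v)

def sub1LA (x : ℕ) (t : LATerm) : ℕ → LATerm := fun v => if v = x then t else .var v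

def LAFml.FreeForM (s : ℕ → LATerm) : LAFml → Prop
  | and φ ψ => φ.FreeForM s ∧ ψ.FreeForM s
  | or φ ψ => φ.FreeForM s ∧ ψ.FreeForM s
  | imp φ ψ => φ.FreeForM s ∧ ψ.FreeForM s
  | not φ => φ.FreeForM s
  | all x φ => (∀ v ∈ φ.fv, v ≠ x → x ∉ (s v).fv) ∧
      φ.FreeForM (fun v => if v = x then .var x else s v)
  | ex x φ => (∀ v ∈ φ.fv, v ≠ x → x ∉ (s v).fv) ∧
      φ.FreeForM (fun v => if v = x then .var x else s v)
  | _ => True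

/-- Classical truth of an `LA`-formula in the standard model. -/
def LATrue : (ℕ → ℕ) → LAFml → Prop
  | ρ, .eq t u => t.eval ρ = u.eval ρ
  | ρ, .and φ ψ => LATrue ρ φ ∧ LATrue ρ ψ
  | ρ, .or φ ψ => LATrue ρ φ ∨ LATrue ρ ψ
  | ρ, .imp φ ψ => LATrue ρ φ → LATrue ρ ψ
  | ρ, .not φ => ¬ LATrue ρ φ
  | ρ, .all x φ => ∀ a, LATrue (Function.update ρ x a) φ
  | ρ, .ex x φ => ∃ a, LATrue (Function.update ρ x a) φ


/-- Kleene's recursive realizability for `LA`-formulas. -/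
def LAReal : (ℕ → ℕ) → ℕ → LAFml → Prop
  | ρ, e, .eq t u => e = 0 ∧ t.eval ρ = u.eval ρ
  | ρ, e, .and φ ψ => LAReal ρ (pexp 0 e) φ ∧ LAReal ρ (pexp 1 e) ψ
  | ρ, e, .or φ ψ => (pexp 0 e = 0 ∧ LAReal ρ (pexp 1 e) φ) ∨
      (pexp 0 e = 1 ∧ LAReal ρ (pexp 1 e) ψ)
  | ρ, e, .imp φ ψ => ∀ a, LAReal ρ a φ → ∃ b ∈ K e a, LAReal ρ b ψ
  | ρ, _, .not φ => ∀ a, ¬ LAReal ρ a φ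
  | ρ, e, .all x φ => ∀ a, ∃ b ∈ K e a, LAReal (Function.update ρ x a) b φ
  | ρ, e, .ex x φ => LAReal (Function.update ρ x (pexp 0 e)) (pexp 1 e) φ

/-- `t₁ ≤ t₂` in `LA`: `∃v (t₁ + v = t₂)`. -/
def leLA (x v : ℕ) (t : LATerm) : LAFml := .ex v (.eq (.add (.var x) (.var v)) t)

inductive IsDelta0LA : LAFml → Prop
  | eq (t u) : IsDelta0LA (.eq t u)
  | and {φ ψ} : IsDelta0LA φ → IsDelta0LA ψ → IsDelta0LA (φ.and ψ)
  | or {φ ψ} : IsDelta0LA φ → IsDelta0LA ψ → IsDelta0LA (φ.or ψ)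
  | imp {φ ψ} : IsDelta0LA φ → IsDelta0LA ψ → IsDelta0LA (φ.imp ψ)
  | not {φ} : IsDelta0LA φ → IsDelta0LA φ.not
  | ball {x v : ℕ} {t : LATerm} {φ} : x ∉ t.fv → v ∉ t.fv → v ≠ x → IsDelta0LA φ →
      IsDelta0LA (.all x ((leLA x v t).imp φ))
  | bex {x v : ℕ} {t : LATerm} {φ} : x ∉ t.fv → v ∉ t.fv → v ≠ x → IsDelta0LA φ →
      IsDelta0LA (.ex x ((leLA x v t).and φ))

inductive IsSigmaLA : LAFml → Prop
  | delta0 {φ} : IsDelta0LA φ → IsSigmaLA φ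
  | and {φ ψ} : IsSigmaLA φ → IsSigmaLA ψ → IsSigmaLA (φ.and ψ)
  | or {φ ψ} : IsSigmaLA φ → IsSigmaLA ψ → IsSigmaLA (φ.or ψ)
  | ball {x v : ℕ} {t : LATerm} {φ} : x ∉ t.fv → v ∉ t.fv → v ≠ x → IsSigmaLA φ →
      IsSigmaLA (.all x ((leLA x v t).imp φ))
  | bex {x v : ℕ} {t : LATerm} {φ} : x ∉ t.fv → v ∉ t.fv → v ≠ x → IsSigmaLA φ →
      IsSigmaLA (.ex x ((leLA x v t).and φ))
  | ex {x : ℕ} {φ} : IsSigmaLA φ → IsSigmaLA (.ex x φ)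

/-- Natural deduction over `LA` from a set `Ax` of non-logical axioms
(intuitionistic logic). -/
inductive LD (Ax : LAFml → Prop) : List LAFml → LAFml → Prop
  | ax {Γ φ} : Ax φ → LD Ax Γ φ
  | hyp {Γ φ} : φ ∈ Γ → LD Ax Γ φ
  | andI {Γ : List LAFml} {φ ψ : LAFml} : LD Ax Γ φ → LD Ax Γ ψ → LD Ax Γ (φ.and ψ)
  | andE1 {Γ : List LAFml} {φ ψ : LAFml} : LD Ax Γ (φ.and ψ) → LD Ax Γ φ
  | andE2 {Γ : List LAFml} {φ ψ : LAFml} : LD Ax Γ (φ.and ψ) → LD Ax Γ ψ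
  | orI1 {Γ : List LAFml} {φ ψ : LAFml} : LD Ax Γ φ → LD Ax Γ (φ.or ψ)
  | orI2 {Γ : List LAFml} {φ ψ : LAFml} : LD Ax Γ ψ → LD Ax Γ (φ.or ψ)
  | orE {Γ φ ψ χ} : LD Ax Γ (φ.or ψ) → LD Ax (φ :: Γ) χ → LD Ax (ψ :: Γ) χ → LD Ax Γ χ
  | impI {Γ : List LAFml} {φ ψ : LAFml} : LD Ax (φ :: Γ) ψ → LD Ax Γ (φ.imp ψ)
  | impE {Γ : List LAFml} {φ ψ : LAFml} : LD Ax Γ (φ.imp ψ) → LD Ax Γ φ → LD Ax Γ ψ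
  | notI {Γ : List LAFml} {φ ψ : LAFml} : LD Ax (φ :: Γ) ψ → LD Ax (φ :: Γ) ψ.not → LD Ax Γ φ.not
  | notE {Γ : List LAFml} {φ ψ : LAFml} : LD Ax Γ φ → LD Ax Γ φ.not → LD Ax Γ ψ
  | allI {Γ x φ} : LD Ax Γ φ → (∀ ψ ∈ Γ, x ∉ ψ.fv) → LD Ax Γ (.all x φ)
  | allE {Γ x φ} (t : LATerm) : LD Ax Γ (.all x φ) → φ.FreeForM (sub1LA x t) →
      LD Ax Γ (φ.msub (sub1LA x t))
  | exI {Γ x φ} (t : LATerm) : LD Ax Γ (φ.msub (sub1LA x t)) → φ.FreeForM (sub1LA x t) →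
      LD Ax Γ (.ex x φ)
  | exE {Γ x φ χ} : LD Ax Γ (.ex x φ) → LD Ax (φ :: Γ) χ → x ∉ χ.fv →
      (∀ ψ ∈ Γ, x ∉ ψ.fv) → LD Ax Γ χ

open LATerm (var) in
/-- The axioms of equality and the Peano axioms for successor, sum and product
(without induction). -/
def baseAxioms : List LAFml := [
  .all 0 (.eq (var 0) (var 0)),
  .all 0 (.all 1 (.all 2 ((LAFml.eq (var 0) (var 1)).imp
    ((LAFml.eq (var 0) (var 2)).imp (.eq (var 1) (var 2)))))),
  .all 0 (.all 1 ((LAFml.eq (var 0) (var 1)).imp (.eq (.succ (var 0)) (.succ (var 1))))),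
  .all 0 (.all 1 ((LAFml.eq (.succ (var 0)) (.succ (var 1))).imp (.eq (var 0) (var 1)))),
  .all 0 (LAFml.not (.eq (.succ (var 0)) .zero)),
  .all 0 (.all 1 (.all 2 ((LAFml.eq (var 0) (var 1)).imp
    (.eq (.add (var 0) (var 2)) (.add (var 1) (var 2)))))),
  .all 0 (.all 1 (.all 2 ((LAFml.eq (var 0) (var 1)).imp
    (.eq (.add (var 2) (var 0)) (.add (var 2) (var 1)))))),
  .all 0 (.all 1 (.all 2 ((LAFml.eq (var 0) (var 1)).imp
    (.eq (.mul (var 0) (var 2)) (.mul (var 1) (var 2)))))),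
  .all 0 (.all 1 (.all 2 ((LAFml.eq (var 0) (var 1)).imp
    (.eq (.mul (var 2) (var 0)) (.mul (var 2) (var 1)))))),
  .all 0 (.eq (.add (var 0) .zero) (var 0)),
  .all 0 (.all 1 (.eq (.add (var 0) (.succ (var 1))) (.succ (.add (var 0) (var 1))))),
  .all 0 (.eq (.mul (var 0) .zero) .zero),
  .all 0 (.all 1 (.eq (.mul (var 0) (.succ (var 1)))
    (.add (.mul (var 0) (var 1)) (var 0))))]

/-- The axioms of intuitionistic Robinson arithmetic `IRA`: the Peano axioms with the
induction scheme replaced by `∀x (x = 0 ∨ ∃y (x = sy))`. -/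
def IRAax (φ : LAFml) : Prop :=
  φ ∈ baseAxioms ∨
    φ = .all 0 ((LAFml.eq (.var 0) .zero).or (.ex 1 (.eq (.var 0) (.succ (.var 1)))))

/-- An instance of the induction scheme. -/
def indInst (x : ℕ) (φ : LAFml) : LAFml :=
  ((φ.msub (sub1LA x .zero)).and
    (.all x (φ.imp (φ.msub (sub1LA x (.succ (.var x))))))).imp (.all x φ)

/-- The axioms of Heyting arithmetic `HA`. -/
def HAax (ψ : LAFml) : Prop := ψ ∈ baseAxioms ∨ ∃ x φ, ψ = indInst x φ




/-- Translation of schemes into pure predicate formulas: the arithmetical predicate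
symbols `Z,E,S,A,M` become the predicate variables `P¹₀,P²₀,P²₁,P³₀,P³₁`, and the other
predicate variables are renamed injectively so as to avoid these five. -/
def Scheme.toPFml : Scheme → PFml
  | .bot => .bot
  | .sZ t => vZ t
  | .sE t u => vE t u
  | .sS t u => vS t u
  | .sA t u w => vA t u w
  | .sM t u w => vM t u w
  | .patom i args => .atom (i + 2) args
  | .and φ ψ => φ.toPFml.and ψ.toPFml
  | .or φ ψ => φ.toPFml.or ψ.toPFml
  | .imp φ ψ => φ.toPFml.imp ψ.toPFml
  | .all x φ => .all x φ.toPFml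
  | .ex x φ => .ex x φ.toPFml

/-- `Eq(E,P₁,…,Pₘ)`: the conjunction of the axioms of equality for the predicate
variables of the scheme `Φ` (as renamed by `Scheme.toPFml`). -/
noncomputable def EqFor (Φ : Scheme) : PFml :=
  bigAnd (Φ.pvars.toList.map fun p => eqAx p.1 (p.2 + 2))

/-- `Φ*`: the pure predicate formula
`Q(Z,E,S,A,M) & Eq(E,P₁,…,Pₘ) → Φ(Z,E,S,A,M,P₁,…,Pₘ)` associated with a scheme `Φ`. -/
noncomputable def SchemeStar (G B : PFml) (Φ : Scheme) : PFml :=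
  ((Qfml G B).and (EqFor Φ)).imp Φ.toPFml

/-- The Markov principle `M` as a pure predicate formula, with `P` the unary
predicate variable `P¹₁`. -/
def Mfml : PFml :=
  ((PFml.all 0 ((PFml.atom 1 [.var 0]).or (PFml.atom 1 [.var 0]).not)).and
    (PFml.ex 0 (PFml.atom 1 [.var 0])).not.not).imp (PFml.ex 0 (PFml.atom 1 [.var 0]))

/-- `G(z,x,y)` where `z,x,y` are the variables `2,0,1` and the distinguished variables
`0,1,2` of `G` play the role of `x,y,z` in `G(x,y,z)` (expressing `{x}(y)=z`). -/
def Gzxy (G : PFml) : PFml :=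
  G.msub fun v => if v = 0 then .var 2 else if v = 1 then .var 0 else
    if v = 2 then .var 1 else .var v

/-- The scheme `nCT` as a pure predicate formula: `P` is the predicate variable `P¹₁`
and `Q'` is `P²₂`. -/
def nCTfml (G : PFml) : PFml :=
  (PFml.all 0 ((PFml.atom 1 [.var 0]).not.imp
      (PFml.ex 1 (PFml.atom 2 [.var 0, .var 1])))).imp
    (PFml.ex 2 (PFml.all 0 ((PFml.atom 1 [.var 0]).not.imp
      (PFml.ex 1 ((Gzxy G).and (PFml.atom 2 [.var 0, .var 1]))))))

/-- The pure predicate formula `nCT*`, i.e. `Q & Eq(E,P,Q') → nCT`. -/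
def nCTstar (G B : PFml) : PFml :=
  ((Qfml G B).and ((eqAx 1 1).and (eqAx 2 2))).imp (nCTfml G)

/-- The calculus `MQC`: intuitionistic predicate calculus together with all
substitutional instances of the Markov principle `M` and of the formula `nCT*`
as axioms. -/
inductive MQC (G B : PFml) : List PFml → PFml → Prop
  | axM {Γ : List PFml} {φ : PFml} : IsInstance Mfml φ → MQC G B Γ φ
  | axCT {Γ : List PFml} {φ : PFml} : IsInstance (nCTstar G B) φ → MQC G B Γ φ
  | hyp {Γ : List PFml} {φ : PFml} : φ ∈ Γ → MQC G B Γ φ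
  | botE {Γ φ} : MQC G B Γ .bot → MQC G B Γ φ
  | andI {Γ : List PFml} {φ ψ : PFml} : MQC G B Γ φ → MQC G B Γ ψ → MQC G B Γ (φ.and ψ)
  | andE1 {Γ : List PFml} {φ ψ : PFml} : MQC G B Γ (φ.and ψ) → MQC G B Γ φ
  | andE2 {Γ : List PFml} {φ ψ : PFml} : MQC G B Γ (φ.and ψ) → MQC G B Γ ψ
  | orI1 {Γ : List PFml} {φ ψ : PFml} : MQC G B Γ φ → MQC G B Γ (φ.or ψ)
  | orI2 {Γ : List PFml} {φ ψ : PFml} : MQC G B Γ ψ → MQC G B Γ (φ.or ψ)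
  | orE {Γ : List PFml} {φ ψ χ : PFml} : MQC G B Γ (φ.or ψ) → MQC G B (φ :: Γ) χ →
      MQC G B (ψ :: Γ) χ → MQC G B Γ χ
  | impI {Γ : List PFml} {φ ψ : PFml} : MQC G B (φ :: Γ) ψ → MQC G B Γ (φ.imp ψ)
  | impE {Γ : List PFml} {φ ψ : PFml} : MQC G B Γ (φ.imp ψ) → MQC G B Γ φ → MQC G B Γ ψ
  | allI {Γ x φ} : MQC G B Γ φ → (∀ ψ ∈ Γ, x ∉ ψ.fv) → MQC G B Γ (.all x φ)
  | allE {Γ x φ} (t : PTerm) : MQC G B Γ (.all x φ) → φ.FreeForM (sub1 x t) →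
      MQC G B Γ (φ.msub (sub1 x t))
  | exI {Γ x φ} (t : PTerm) : MQC G B Γ (φ.msub (sub1 x t)) → φ.FreeForM (sub1 x t) →
      MQC G B Γ (.ex x φ)
  | exE {Γ x φ χ} : MQC G B Γ (.ex x φ) → MQC G B (φ :: Γ) χ → x ∉ χ.fv →
      (∀ ψ ∈ Γ, x ∉ ψ.fv) → MQC G B Γ χ

/-- The classical predicate calculus `CQC`: intuitionistic predicate calculus together
with the law of the excluded middle. -/
inductive CQC : List PFml → PFml → Prop
  | em {Γ : List PFml} (φ : PFml) : CQC Γ (φ.or φ.not)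
  | hyp {Γ : List PFml} {φ : PFml} : φ ∈ Γ → CQC Γ φ
  | botE {Γ φ} : CQC Γ .bot → CQC Γ φ
  | andI {Γ : List PFml} {φ ψ : PFml} : CQC Γ φ → CQC Γ ψ → CQC Γ (φ.and ψ)
  | andE1 {Γ : List PFml} {φ ψ : PFml} : CQC Γ (φ.and ψ) → CQC Γ φ
  | andE2 {Γ : List PFml} {φ ψ : PFml} : CQC Γ (φ.and ψ) → CQC Γ ψ
  | orI1 {Γ : List PFml} {φ ψ : PFml} : CQC Γ φ → CQC Γ (φ.or ψ)
  | orI2 {Γ : List PFml} {φ ψ : PFml} : CQC Γ ψ → CQC Γ (φ.or ψ)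
  | orE {Γ : List PFml} {φ ψ χ : PFml} : CQC Γ (φ.or ψ) → CQC (φ :: Γ) χ →
      CQC (ψ :: Γ) χ → CQC Γ χ
  | impI {Γ : List PFml} {φ ψ : PFml} : CQC (φ :: Γ) ψ → CQC Γ (φ.imp ψ)
  | impE {Γ : List PFml} {φ ψ : PFml} : CQC Γ (φ.imp ψ) → CQC Γ φ → CQC Γ ψ
  | allI {Γ x φ} : CQC Γ φ → (∀ ψ ∈ Γ, x ∉ ψ.fv) → CQC Γ (.all x φ)
  | allE {Γ x φ} (t : PTerm) : CQC Γ (.all x φ) → φ.FreeForM (sub1 x t) →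
      CQC Γ (φ.msub (sub1 x t))
  | exI {Γ x φ} (t : PTerm) : CQC Γ (φ.msub (sub1 x t)) → φ.FreeForM (sub1 x t) →
      CQC Γ (.ex x φ)
  | exE {Γ x φ χ} : CQC Γ (.ex x φ) → CQC (φ :: Γ) χ → x ∉ χ.fv →
      (∀ ψ ∈ Γ, x ∉ ψ.fv) → CQC Γ χ

/-- Auxiliary translation for the predicate form: the formula expressing that the
`LA`-term `t` has value `v`; `k` is a supply of fresh variables, and the next unused
fresh variable is returned. -/
def LATerm.pf : LATerm → ℕ → ℕ → PFml × ℕ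
  | .var u, v, k => (vE (.var u) (.var v), k)
  | .zero, v, k => (vZ (.var v), k)
  | .succ t, v, k =>
      let r := t.pf k (k + 1)
      (.ex k (r.1.and (vS (.var k) (.var v))), r.2)
  | .add t u, v, k =>
      let r1 := t.pf k (k + 2)
      let r2 := u.pf (k + 1) r1.2
      (.ex k (.ex (k + 1) (r1.1.and (r2.1.and (vA (.var k) (.var (k + 1)) (.var v))))), r2.2)
  | .mul t u, v, k =>
      let r1 := t.pf k (k + 2)
      let r2 := u.pf (k + 1) r1.2
      (.ex k (.ex (k + 1) (r1.1.and (r2.1.and (vM (.var k) (.var (k + 1)) (.var v))))), r2.2)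

/-- Auxiliary translation for the predicate form of an `LA`-formula;
`k` is a supply of fresh variables. -/
def LAFml.pf : LAFml → ℕ → PFml
  | .eq t u, k =>
      let r1 := t.pf k (k + 2)
      let r2 := u.pf (k + 1) r1.2
      .ex k (.ex (k + 1) (r1.1.and (r2.1.and (vE (.var k) (.var (k + 1))))))
  | .and φ ψ, k => (φ.pf k).and (ψ.pf k)
  | .or φ ψ, k => (φ.pf k).or (ψ.pf k)
  | .imp φ ψ, k => (φ.pf k).imp (ψ.pf k)
  | .not φ, k => (φ.pf k).not
  | .all x φ, k => .all x (φ.pf k)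
  | .ex x φ, k => .ex x (φ.pf k)

def LATerm.vmax : LATerm → ℕ
  | .var v => v + 1
  | .zero => 0
  | .succ t => t.vmax
  | .add t u => max t.vmax u.vmax
  | .mul t u => max t.vmax u.vmax

def LAFml.vmax : LAFml → ℕ
  | .eq t u => max t.vmax u.vmax
  | .and φ ψ => max φ.vmax ψ.vmax
  | .or φ ψ => max φ.vmax ψ.vmax
  | .imp φ ψ => max φ.vmax ψ.vmax
  | .not φ => φ.vmax
  | .all x φ => max (x + 1) φ.vmax
  | .ex x φ => max (x + 1) φ.vmax

/-- The predicate form of an `LA`-formula: the result of eliminating the function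
symbols `0, s, +, ·` and replacing `=` by the predicate symbol `E`. -/
def predForm (φ : LAFml) : PFml := φ.pf φ.vmax

/-- Translation of `L*`-terms into `LA`-terms (constants become numerals). -/
def PTerm.toLA : PTerm → LATerm
  | .var v => .var v
  | .const c => numeral c

/-- Substitution of arithmetical formulas for the predicate variables of a predicate
formula: the atom `Pⁿᵢ(t₁,…,tₙ)` is replaced by the result of substituting `t₁,…,tₙ`
for the distinguished variables `0,…,n-1` of the `LA`-formula `σ n i`. -/
def PFml.toLA (σ : ℕ → ℕ → LAFml) : PFml → LAFml
  | .bot => .eq .zero (.succ .zero)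
  | .atom i args => (σ args.length i).msub
      (fun v => if h : v < args.length then (args.get ⟨v, h⟩).toLA else .var v)
  | .and φ ψ => (φ.toLA σ).and (ψ.toLA σ)
  | .or φ ψ => (φ.toLA σ).or (ψ.toLA σ)
  | .imp φ ψ => (φ.toLA σ).imp (ψ.toLA σ)
  | .all x φ => .all x (φ.toLA σ)
  | .ex x φ => .ex x (φ.toLA σ)

/-- Acceptability of the arithmetical substitution `σ` for a predicate formula. -/
def PFml.AcceptLA (σ : ℕ → ℕ → LAFml) : PFml → Prop
  | .atom i args => (σ args.length i).FreeForM
      (fun v => if h : v < args.length then (args.get ⟨v, h⟩).toLA else .var v)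
  | .and φ ψ => φ.AcceptLA σ ∧ ψ.AcceptLA σ
  | .or φ ψ => φ.AcceptLA σ ∧ ψ.AcceptLA σ
  | .imp φ ψ => φ.AcceptLA σ ∧ ψ.AcceptLA σ
  | .all x φ => (∀ n i, φ.occursP n i → x ∉ (σ n i).fv \ Finset.range n) ∧ φ.AcceptLA σ
  | .ex x φ => (∀ n i, φ.occursP n i → x ∉ (σ n i).fv \ Finset.range n) ∧ φ.AcceptLA σ
  | .bot => True

/-- The standard arithmetical reading of the predicate symbols `Z,E,S,A,M`. -/
def arithSig : ℕ → ℕ → LAFml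
  | 1, 0 => .eq (.var 0) .zero
  | 2, 0 => .eq (.var 0) (.var 1)
  | 2, 1 => .eq (.succ (.var 0)) (.var 1)
  | 3, 0 => .eq (.add (.var 0) (.var 1)) (.var 2)
  | 3, 1 => .eq (.mul (.var 0) (.var 1)) (.var 2)
  | _, _ => .eq .zero (.succ .zero)

/-- An instance of the Markov scheme `M` in the language `LA`. -/
def MinstLA (x : ℕ) (φ : LAFml) : LAFml :=
  ((LAFml.all x (φ.or φ.not)).and (LAFml.ex x φ).not.not).imp (.ex x φ)

/-- An instance of the scheme `nCT` in the language `LA` (with `x,y,e` the variables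
`0,1,2`): `∀x(¬Ψ(x) → ∃y Φ(x,y)) → ∃e ∀x(¬Ψ(x) → ∃y(G(e,x,y) & Φ(x,y)))`. -/
def nCTinstLA (GLA Ψ Φ : LAFml) : LAFml :=
  (LAFml.all 0 (Ψ.not.imp (.ex 1 Φ))).imp
    (.ex 2 (.all 0 (Ψ.not.imp (.ex 1 ((GLA.msub fun v =>
      if v = 0 then .var 2 else if v = 1 then .var 0 else
        if v = 2 then .var 1 else .var v).and Φ)))))

/-- The axioms of Markov arithmetic `MA = HA + M + nCT`. -/
def MAax (GLA : LAFml) (ψ : LAFml) : Prop :=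
  HAax ψ ∨ (∃ x φ, ψ = MinstLA x φ) ∨
    (∃ Ψ Φ : LAFml, 1 ∉ Ψ.fv ∧ 2 ∉ Ψ.fv ∧ 2 ∉ Φ.fv ∧ ψ = nCTinstLA GLA Ψ Φ)

/-- The axioms of the theory `CA`: the Peano axioms (those of `HA`) together with all
arithmetical substitutional instances of the predicate formulas `M` and `nCT*`. -/
def CAax (G B : PFml) (ψ : LAFml) : Prop :=
  HAax ψ ∨ (∃ σ, Mfml.AcceptLA σ ∧ ψ = Mfml.toLA σ) ∨
    (∃ σ, (nCTstar G B).AcceptLA σ ∧ ψ = (nCTstar G B).toLA σ)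


/-- The interpretation `f` is a model of the closed formula `Φ` if `Φ` is
`f`-realizable. -/
def IsModel (f : Interp) (φ : PFml) : Prop := ∃ e, Realizes f rho0 e φ

/-- A natural number `a` is `f`-standard if the formula `[n](a)` is `f`-realizable
for some `n`. -/
def fStandard (f : Interp) (a : ℕ) : Prop :=
  ∃ n e, Realizes f rho0 e (numFt n (.const a))

/-- The scheme `nCT` (with `P` the unary predicate variable `P¹₀` and `Q'` the binary
predicate variable `P²₀`, and `x,y,z` the variables `0,1,2`):
`∀x(¬P(x) → ∃y Q'(x,y)) → ∃z ∀x (¬P(x) → ∃y (G(z,x,y) & Q'(x,y)))`. -/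
def nCTscheme (GS : Scheme) : Scheme :=
  (Scheme.all 0 ((Scheme.patom 0 [.var 0]).not.imp
      (.ex 1 (.patom 0 [.var 0, .var 1])))).imp
    (.ex 2 (.all 0 ((Scheme.patom 0 [.var 0]).not.imp
      (.ex 1 ((GS.msub fun v => if v = 0 then .var 2 else if v = 1 then .var 0 else
          if v = 2 then .var 1 else .var v).and (.patom 0 [.var 0, .var 1]))))))

/-- The arithmetical formula `Φ(x) = ∃y (Z(y) & G(x,x,y))` (with `x,y` the
variables `0,1`), expressing `{x}(x) = 0`. -/
def PhiX (G : PFml) : PFml :=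
  .ex 1 ((vZ (.var 1)).and (G.msub fun v =>
    if v = 0 then .var 0 else if v = 1 then .var 0 else
      if v = 2 then .var 1 else .var v))

/-- The predicate formula `Ψ* = (Q → Ψ)` where `Ψ = ¬∀x(¬Φ(x) ∨ Φ(x))` and
`Φ(x) = ∃y(Z(y) & G(x,x,y))`. -/
def PsiStar (G B : PFml) : PFml :=
  (Qfml G B).imp (PFml.not (.all 0 (((PhiX G).not).or (PhiX G))))

end Cpc

/-!
A realizer `u` of `∀x (Φ ∨ Ψ)` decides, uniformly in the interpretation, one of `Φ(n)`, `Ψ(n)` for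
each `n`. If some `Ψ(n)` is not realizable, `u` must choose `Φ(n)` there, so an unbounded search
through the values `{u}(0), {u}(1), …` for a left choice halts; the `n` it stops at, paired with the
realizer of `Φ(n)` contained in `{u}(n)`, realizes `∃x Φ`. For `Ψ = ¬Φ` the hypothesis on `Ψ` is
what `¬¬∃x Φ` provides: classically, it is realizable only if `∃x Φ` is.
-/

namespace Cpc

theorem primrec₂_pow : Primrec₂ ((· ^ ·) : ℕ → ℕ → ℕ) :=
  Primrec₂.unpaired'.1 Nat.Primrec.pow

theorem primrecRel_dvd : PrimrecRel ((· ∣ ·) : ℕ → ℕ → Prop) :=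
  (Primrec.eq.comp₂ (Primrec.nat_mod.comp₂ Primrec₂.right Primrec₂.left)
    (Primrec₂.const 0)).of_eq fun d n => (Nat.dvd_iff_mod_eq_zero (m := d) (n := n)).symm

theorem factorization_eq_findGreatest_pow_dvd {p : ℕ} (hp : p.Prime) (n : ℕ) :
    n.factorization p = Nat.findGreatest (p ^ · ∣ n) n := by
  rcases eq_or_ne n 0 with rfl | hn
  · simp
  refine (Nat.findGreatest_eq_iff.2 ⟨(Nat.factorization_lt p hn).le,
    fun _ => Nat.ordProj_dvd n p, fun k hk _ hdvd => ?_⟩).symm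
  exact hk.not_ge ((hp.pow_dvd_iff_le_factorization hn).1 hdvd)

theorem primrec_factorization (p : ℕ) : Primrec fun n : ℕ => n.factorization p := by
  by_cases hp : p.Prime
  · have hdvd : PrimrecRel fun n k : ℕ => p ^ k ∣ n :=
      primrecRel_dvd.comp₂ (primrec₂_pow.comp₂ (Primrec₂.const p) Primrec₂.right) Primrec₂.left
    exact (Primrec.nat_findGreatest Primrec.id hdvd).of_eq fun n =>
      (factorization_eq_findGreatest_pow_dvd hp n).symm
  · exact (Primrec.const 0).of_eq fun n => (n.factorization_eq_zero_of_not_prime hp).symm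

theorem primrec_pexp (i : ℕ) : Primrec (pexp i) :=
  primrec_factorization _

/-- The number `⟨x, y⟩ = 2 ^ x * 3 ^ y`, which codes a pair in the sense of the projections
`pexp 0` and `pexp 1` used by realizability. -/
def expPair (x y : ℕ) : ℕ := 2 ^ x * 3 ^ y

theorem primrec₂_expPair : Primrec₂ expPair :=
  Primrec.nat_mul.comp₂ (primrec₂_pow.comp₂ (Primrec₂.const 2) Primrec₂.left)
    (primrec₂_pow.comp₂ (Primrec₂.const 3) Primrec₂.right)

theorem factorization_expPair (x y : ℕ) :
    (expPair x y).factorization = Finsupp.single 2 x + Finsupp.single 3 y := by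
  rw [expPair, Nat.factorization_mul (by positivity) (by positivity),
    Nat.prime_two.factorization_pow, Nat.prime_three.factorization_pow]

theorem pexp_zero_expPair (x y : ℕ) : pexp 0 (expPair x y) = x := by
  simp [pexp, factorization_expPair]

theorem pexp_one_expPair (x y : ℕ) : pexp 1 (expPair x y) = y := by
  simp [pexp, factorization_expPair]

theorem partrec₂_K : Partrec₂ K :=
  Nat.Partrec.Code.eval_part.comp₂ ((Computable.ofNat _).comp Computable.fst).to₂
    Computable.snd.to₂

theorem exists_K_eq {f : ℕ →. ℕ} (hf : Partrec f) : ∃ e, K e = f := by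
  obtain ⟨c, rfl⟩ := Nat.Partrec.Code.exists_code.1 (Partrec.nat_iff.1 hf)
  exact ⟨Encodable.encode c, funext fun a => by rw [K, Denumerable.ofNat_encode]⟩

section LeftSearch

/-- Whether `{u}(n)`, read as a realizer of a disjunction, chooses the left disjunct. -/
noncomputable def choosesLeft (u n : ℕ) : Part Bool :=
  (K u n).map fun b => decide (pexp 0 b = 0)

/-- The least `n` for which `{u}(n)` chooses the left disjunct, found by unbounded search; it is
undefined if the search meets an undefined `{u}(n)` or never ends. -/
noncomputable def leastLeft (u : ℕ) : Part ℕ := Nat.rfind (choosesLeft u)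

/-- For a realizer `u` of `∀x (Φ ∨ Ψ)`, the candidate realizer of `∃x Φ`: the index found by
`leastLeft`, paired with the realizer of the left disjunct extracted from `u` there. -/
noncomputable def leftWitness (u : ℕ) : Part ℕ :=
  (leastLeft u).bind fun n => (K u n).map fun b => expPair n (pexp 1 b)

theorem partrec₂_choosesLeft : Partrec₂ choosesLeft :=
  have hdec : Primrec fun b => decide (pexp 0 b = 0) :=
    (Primrec.eq.comp (primrec_pexp 0) (Primrec.const 0)).decide
  partrec₂_K.map (hdec.to_comp.comp Computable.snd).to₂

theorem partrec_leftWitness : Partrec leftWitness :=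
  have hpair : Primrec₂ fun (q : ℕ × ℕ) (b : ℕ) => expPair q.2 (pexp 1 b) :=
    primrec₂_expPair.comp (Primrec.snd.comp Primrec.fst) ((primrec_pexp 1).comp Primrec.snd)
  (Partrec.rfind partrec₂_choosesLeft).bind (partrec₂_K.map hpair.to_comp)

variable {u n : ℕ}

theorem true_mem_choosesLeft_iff : true ∈ choosesLeft u n ↔ ∃ b ∈ K u n, pexp 0 b = 0 := by
  simp [choosesLeft]

theorem leastLeft_dom (htotal : ∀ m, (K u m).Dom) (hleft : ∃ b ∈ K u n, pexp 0 b = 0) :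
    (leastLeft u).Dom :=
  Nat.rfind_dom.2 ⟨n, true_mem_choosesLeft_iff.2 hleft, fun {m} _ => htotal m⟩

theorem exists_mem_K_of_mem_leastLeft (hn : n ∈ leastLeft u) : ∃ b ∈ K u n, pexp 0 b = 0 :=
  true_mem_choosesLeft_iff.1 (Nat.rfind_spec hn)

theorem exists_expPair_mem_leftWitness (htotal : ∀ m, (K u m).Dom)
    (hleft : ∃ b ∈ K u n, pexp 0 b = 0) :
    ∃ m, ∃ b ∈ K u m, pexp 0 b = 0 ∧ expPair m (pexp 1 b) ∈ leftWitness u := by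
  obtain ⟨m, hm⟩ := Part.dom_iff_mem.1 (leastLeft_dom htotal hleft)
  obtain ⟨b, hb, hb0⟩ := exists_mem_K_of_mem_leastLeft hm
  exact ⟨m, b, hb, hb0, Part.mem_bind hm (Part.mem_map _ hb)⟩

end LeftSearch

section Realizes

variable {f : Interp} {ρ : ℕ → ℕ} {e : ℕ} {φ ψ : PFml}

theorem realizes_not_iff : Realizes f ρ e φ.not ↔ ∀ a, ¬Realizes f ρ a φ := by
  simp [PFml.not, Realizes]

theorem realizes_not_not_iff : Realizes f ρ e φ.not.not ↔ ∃ a, Realizes f ρ a φ := by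
  simp [realizes_not_iff]

theorem realizes_ex_expPair_iff {x n a : ℕ} :
    Realizes f ρ (expPair n a) (.ex x φ) ↔ Realizes f (Function.update ρ x n) a φ := by
  simp only [Realizes, pexp_zero_expPair, pexp_one_expPair]

theorem Realizes.left_of_pexp_zero (he : Realizes f ρ e (φ.or ψ)) (h0 : pexp 0 e = 0) :
    Realizes f ρ (pexp 1 e) φ := by
  simpa [Realizes, h0] using he

theorem Realizes.pexp_zero_of_not_right (he : Realizes f ρ e (φ.or ψ))
    (hψ : ∀ a, ¬Realizes f ρ a ψ) : pexp 0 e = 0 :=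
  (he.resolve_right fun hright => hψ _ hright.2).1

theorem Realizes.exists_mem_leftWitness {x u n : ℕ} (hu : Realizes f ρ u (.all x (φ.or ψ)))
    (hψ : ∀ a, ¬Realizes f (Function.update ρ x n) a ψ) :
    ∃ b ∈ leftWitness u, Realizes f ρ b (.ex x φ) := by
  have htotal (m : ℕ) : (K u m).Dom := Part.dom_iff_mem.2 ((hu m).imp fun _ => And.left)
  have hleft : ∃ b ∈ K u n, pexp 0 b = 0 :=
    (hu n).imp fun _ hb => ⟨hb.1, hb.2.pexp_zero_of_not_right hψ⟩
  obtain ⟨m, b, hb, hb0, hmem⟩ := exists_expPair_mem_leftWitness htotal hleft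
  obtain ⟨b', hb', hreal⟩ := hu m
  obtain rfl := Part.mem_unique hb hb'
  exact ⟨_, hmem, realizes_ex_expPair_iff.2 (hreal.left_of_pexp_zero hb0)⟩

end Realizes

end Cpc

theorem markov_absolutely_realizable_general :
    ∃ e : ℕ, ∀ (f : Cpc.Interp) (ρ : ℕ → ℕ) (x : ℕ) (φ : Cpc.PFml), Cpc.Realizes f ρ e
      (((Cpc.PFml.all x (φ.or φ.not)).and (Cpc.PFml.ex x φ).not.not).imp (.ex x φ)) := by
  obtain ⟨e, he⟩ := Cpc.exists_K_eq
    (Cpc.partrec_leftWitness.comp (Cpc.primrec_pexp 0).to_comp)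
  refine ⟨e, fun f ρ x φ a ⟨hdec, hnn⟩ => ?_⟩
  rw [he]
  obtain ⟨d, hd⟩ := Cpc.realizes_not_not_iff.1 hnn
  exact hdec.exists_mem_leftWitness fun c hc => Cpc.realizes_not_iff.1 hc _ hd

/-- the Markov principle
`∀x (P(x) ∨ ¬P(x)) & ¬¬∃x P(x) → ∃x P(x)` is absolutely realizable. -/
theorem markov_absolutely_realizable :
    ∃ e : ℕ, ∀ f : Cpc.Interp, Cpc.Realizes f Cpc.rho0 e Cpc.Mfml := by
  exact markov_absolutely_realizable_general.imp fun _ he f => he f _ _ _
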